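/- Let n ≥ 1 and let a : ℝ → Matrix (Fin n) (Fin n) ℂ be continuously differentiable, 2π-periodic (a(θ + 2π) = a(θ) for all θ), and unitary-valued (a(θ)* · a(θ) = 1 for all θ). Then the integral ∫₀^{2π} trace(a(θ)⁻¹ · a′(θ)) dθ lies in 2πi·ℤ: there exists an integer m with ∫₀^{2π} trace(a(θ)⁻¹ · a′(θ)) dθ = 2πi·m. (The integer m is the winding number of the loop θ ↦ det(a(θ)) in the unit circle.) -/

import Mathlib

/-!
Jacobi's formula gives `(det a)' = det a * tr (a⁻¹ a')`. With
`g t = ∫₀ᵗ tr (a⁻¹ a')`, the function `det a * exp (-g)` therefore has derivative zero and is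
constant; comparing its values at `0` and `2π`, where `det a` takes the same nonzero value, yields
`exp (g (2π)) = 1`, so `g (2π) ∈ 2πi ℤ`. Unitarity enters through `a⁻¹ = aᴴ`, which makes
the integrand continuous.
-/

open Matrix

/-- Jacobi's formula for the derivative of a determinant, with entrywise differentiability. -/
lemma hasDerivAt_det_of_entries {n : ℕ} (a : ℝ → Matrix (Fin n) (Fin n) ℂ)
    (D : Matrix (Fin n) (Fin n) ℂ) (θ : ℝ)
    (ha : ∀ i j, HasDerivAt (fun s => a s i j) (D i j) θ) :
    HasDerivAt (fun s => (a s).det) (Matrix.trace ((a θ).adjugate * D)) θ := by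
  have key : Matrix.trace ((a θ).adjugate * D) =
      ∑ σ : Equiv.Perm (Fin n), ((Equiv.Perm.sign σ : ℤ) : ℂ) *
        ∑ i, (∏ j ∈ Finset.univ.erase i, a θ (σ j) j) • D (σ i) i := by
    -- The `i`-th diagonal entry is, by Cramer's rule, the determinant of `a θ` with its `i`-th
    -- column replaced by that of `D`.
    have h1 : ∀ i, ((a θ).adjugate * D) i i = ((a θ).updateCol i (fun k => D k i)).det := by
      intro i
      rw [← cramer_apply, cramer_eq_adjugate_mulVec]
      rfl
    simp only [Matrix.trace, Matrix.diag, h1, det_apply', Finset.mul_sum]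
    rw [Finset.sum_comm]
    refine Finset.sum_congr rfl fun σ _ => Finset.sum_congr rfl fun i _ => ?_
    rw [← Finset.prod_erase_mul _ _ (Finset.mem_univ i), updateCol_self, smul_eq_mul]
    congr 2
    refine Finset.prod_congr rfl fun j hj => ?_
    rw [updateCol_ne (Finset.ne_of_mem_erase hj)]
  rw [key]
  simp only [det_apply']
  refine HasDerivAt.fun_sum fun σ _ => HasDerivAt.const_mul _ ?_
  exact HasDerivAt.fun_finsetProd fun i _ => ha (σ i) i

/-- For a continuously differentiable, `2π`-periodic, unitary-valued
loop `a : ℝ → U(n)`, the integral `∫₀^{2π} tr(a(θ)⁻¹ a'(θ)) dθ` lies in `2πi·ℤ`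
(the integer being the winding number of `det ∘ a`). -/
theorem integral_trace_inv_mul_deriv_mem_two_pi_I_int
    {n : ℕ} (hn : 1 ≤ n) (a a' : ℝ → Matrix (Fin n) (Fin n) ℂ)
    (ha : ∀ θ i j, HasDerivAt (fun s => a s i j) (a' θ i j) θ)
    (ha' : ∀ i j, Continuous fun θ => a' θ i j)
    (hper : ∀ θ, a (θ + 2 * Real.pi) = a θ)
    (hunit : ∀ θ, (a θ)ᴴ * a θ = 1) :
    ∃ m : ℤ, (∫ θ in (0:ℝ)..(2 * Real.pi), Matrix.trace ((a θ)⁻¹ * a' θ)) =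
      2 * (Real.pi : ℂ) * Complex.I * (m : ℂ) := by
  have hinv : ∀ θ, (a θ)⁻¹ = (a θ)ᴴ := fun θ => inv_eq_left_inv (hunit θ)
  have hdet : ∀ θ, (a θ).det ≠ 0 := fun θ h => by
    have := congrArg Matrix.det (hunit θ)
    simp [h] at this
  have hca : Continuous a := continuous_matrix fun i j =>
    continuous_iff_continuousAt.2 fun θ => (ha θ i j).continuousAt
  have hca' : Continuous a' := continuous_matrix ha'
  have hf : Continuous fun θ => Matrix.trace ((a θ)⁻¹ * a' θ) := by
    simp only [hinv]
    exact (hca.matrix_conjTranspose.matrix_mul hca').matrix_trace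
  set f : ℝ → ℂ := fun θ => Matrix.trace ((a θ)⁻¹ * a' θ) with hfdef
  have hdd : ∀ θ, HasDerivAt (fun s => (a s).det) ((a θ).det * f θ) θ := by
    intro θ
    convert hasDerivAt_det_of_entries a (a' θ) θ (ha θ) using 1
    simp only [hfdef]
    rw [inv_def, smul_mul, trace_smul, Ring.inverse_eq_inv', smul_eq_mul,
      mul_inv_cancel_left₀ (hdet θ)]
  have hg : ∀ θ, HasDerivAt (fun t => ∫ s in (0:ℝ)..t, f s) (f θ) θ := fun θ =>
    intervalIntegral.integral_hasDerivAt_right (hf.intervalIntegrable _ _)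
      hf.stronglyMeasurable.stronglyMeasurableAtFilter hf.continuousAt
  have hconst : ∀ θ, HasDerivAt
      (fun t => (a t).det * Complex.exp (-∫ s in (0:ℝ)..t, f s)) 0 θ := by
    intro θ
    exact ((hdd θ).fun_mul (hg θ).fun_neg.cexp).congr_deriv (by ring)
  have heq := is_const_of_deriv_eq_zero (fun θ => (hconst θ).differentiableAt)
    (fun θ => (hconst θ).deriv) (2 * Real.pi) 0
  have hp : a (2 * Real.pi) = a 0 := by simpa using hper 0
  simp only [hp, intervalIntegral.integral_same, neg_zero] at heq
  have hexp := mul_left_cancel₀ (hdet 0) heq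
  rw [Complex.exp_zero, Complex.exp_neg, inv_eq_one, Complex.exp_eq_one_iff] at hexp
  obtain ⟨m, hm⟩ := hexp
  exact ⟨m, by rw [hm]; ring⟩
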